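/- arXiv:1702.00078 — 3 statements merged into one kernel-verified Lean document; each statement's English description precedes it below -/
import Mathlib

section
/- Let p(a,b|x,y) be a bipartite no-signaling box with Alice inputs x ∈ {1,…,n}, Bob inputs y ∈ {1,…,m}, and finite output sets, and let q(a,b|x,y) be another bipartite no-signaling box with the same inputs and outputs such that the joint Alice–Bob statistics for Bob's input y = 1 agree: q(a,b|x,1) = p(a,b|x,1) for all a, b, x. Then for any family of real coefficients c(a,b,x,y) with |c(a,b,x,y)| ≤ 1, the corresponding Bell quantities β(p) = Σ_{a,b,x,y} c(a,b,x,y)·p(a,b|x,y) and β(q) satisfy |β(p) − β(q)| ≤ n·𝒟, where 𝒟 = Σ_x (1/n) Σ_a p(a|x) Σ_{y ≠ 1} Σ_b |p(b|y,a,x) − q(b|y,a,x)| is the average total disturbance (here p(a|x) = Σ_b p(a,b|x,y) is Alice's marginal, and p(b|y,a,x) = p(a,b|x,y)/p(a|x) is Bob's conditional distribution, with the convention that terms with p(a|x) = 0 are omitted). -/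
open Finset

/-- A bipartite no-signaling box: nonnegative, normalized conditional distributions whose
Alice marginal is independent of Bob's input and vice versa. -/
def IsNSBox {α β : Type*} [Fintype α] [Fintype β] {n m : ℕ}
    (p : α → β → Fin n → Fin m → ℝ) : Prop :=
  (∀ a b x y, 0 ≤ p a b x y) ∧
  (∀ x y, ∑ a, ∑ b, p a b x y = 1) ∧
  (∀ a x y y', ∑ b, p a b x y = ∑ b, p a b x y') ∧
  (∀ b y x x', ∑ a, p a b x y = ∑ a, p a b x' y)

/-- If two bipartite no-signaling boxes agree on their joint statistics at Bob's input `y = 1`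
(here the input `0 : Fin m`), then for any Bell expression with coefficients bounded by `1`
in modulus, the difference of the Bell values is bounded by `n` times the average total
disturbance `𝒟` (conditionals are formed by division, terms with vanishing Alice marginal
contributing `0`). -/
theorem bell_value_diff_le_n_mul_disturbance
    {α β : Type*} [Fintype α] [Fintype β] {n m : ℕ} [NeZero n] [NeZero m]
    (p q : α → β → Fin n → Fin m → ℝ)
    (hp : IsNSBox p) (hq : IsNSBox q)
    (hagree : ∀ a b x, q a b x 0 = p a b x 0)
    (c : α → β → Fin n → Fin m → ℝ)
    (hc : ∀ a b x y, |c a b x y| ≤ 1) :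
    |(∑ x, ∑ y, ∑ a, ∑ b, c a b x y * p a b x y) -
        (∑ x, ∑ y, ∑ a, ∑ b, c a b x y * q a b x y)| ≤
      (n : ℝ) *
        (∑ x, (1 / (n : ℝ)) * ∑ a, (∑ b, p a b x 0) *
          ∑ y ∈ Finset.univ.filter (fun y => y ≠ (0 : Fin m)), ∑ b,
            |p a b x y / (∑ b', p a b' x y) - q a b x y / (∑ b', q a b' x y)|) := by
  obtain ⟨hp0, -, hpn, -⟩ := hp
  obtain ⟨hq0, -, hqn, -⟩ := hq
  have hn : (n : ℝ) ≠ 0 := Nat.cast_ne_zero.mpr (NeZero.ne n)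
  have key : ∀ a b x y, |p a b x y - q a b x y| = (∑ b, p a b x 0) *
      |p a b x y / (∑ b', p a b' x y) - q a b x y / (∑ b', q a b' x y)| := by
    intro a b x y
    have h1 : ∑ b', p a b' x y = ∑ b', p a b' x 0 := hpn a x y 0
    have h2 : ∑ b', q a b' x y = ∑ b', p a b' x 0 := by
      rw [hqn a x y 0]
      exact Finset.sum_congr rfl fun b _ => hagree a b x
    have hS : 0 ≤ ∑ b', p a b' x 0 := Finset.sum_nonneg fun b _ => hp0 a b x 0
    rcases hS.eq_or_lt with h | h
    · have e1 : p a b x y = 0 :=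
        (Finset.sum_eq_zero_iff_of_nonneg fun b _ => hp0 a b x y).1
          (h1.trans h.symm) b (Finset.mem_univ b)
      have e2 : q a b x y = 0 :=
        (Finset.sum_eq_zero_iff_of_nonneg fun b _ => hq0 a b x y).1
          (h2.trans h.symm) b (Finset.mem_univ b)
      simp [e1, e2]
    · rw [h1, h2, ← sub_div, abs_div, abs_of_pos h, mul_div_cancel₀ _ h.ne']
  have hR : (n : ℝ) *
        (∑ x, (1 / (n : ℝ)) * ∑ a, (∑ b, p a b x 0) *
          ∑ y ∈ Finset.univ.filter (fun y => y ≠ (0 : Fin m)), ∑ b,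
            |p a b x y / (∑ b', p a b' x y) - q a b x y / (∑ b', q a b' x y)|)
      = ∑ x, ∑ y, ∑ a, ∑ b, |p a b x y - q a b x y| := by
    rw [← Finset.mul_sum, ← mul_assoc, mul_one_div_cancel hn, one_mul]
    refine Finset.sum_congr rfl fun x _ => ?_
    rw [Finset.sum_comm (s := (Finset.univ : Finset (Fin m)))]
    refine Finset.sum_congr rfl fun a _ => ?_
    simp_rw [Finset.mul_sum, ← key]
    refine Finset.sum_subset (Finset.subset_univ _) fun y _ hy => ?_
    have : y = 0 := by simpa using hy
    subst this
    simp [hagree]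
  rw [hR]
  simp only [← Finset.sum_sub_distrib]
  refine (Finset.abs_sum_le_sum_abs _ _).trans (Finset.sum_le_sum fun x _ => ?_)
  refine (Finset.abs_sum_le_sum_abs _ _).trans (Finset.sum_le_sum fun y _ => ?_)
  refine (Finset.abs_sum_le_sum_abs _ _).trans (Finset.sum_le_sum fun a _ => ?_)
  refine (Finset.abs_sum_le_sum_abs _ _).trans (Finset.sum_le_sum fun b _ => ?_)
  rw [← mul_sub, abs_mul]
  exact mul_le_of_le_one_left (abs_nonneg _) (hc a b x y)
end

section
/- Let p̃(a,b,g|x,y) be a tripartite no-signaling box where Alice has inputs x ∈ {1,2}, Bob has inputs y ∈ {1,2}, Grace has a single input, and all outputs are binary (valued in {−1,+1}). Let β_CHSH = ⟨A₁B₁⟩ + ⟨A₁B₂⟩ + ⟨A₂B₁⟩ − ⟨A₂B₂⟩ be the CHSH quantity computed from the Alice–Bob marginal of p̃, and let ⟨B₁ᵍB₁⟩ = Σ_{b,g} b·g·p̃(b,g|y=1) be the correlator between Grace's output and Bob's output at input y = 1, computed from the Bob–Grace marginal. Then β_CHSH + 2⟨B₁ᵍB₁⟩ ≤ 4. -/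
open Finset

/-- The sign `±1` associated with a binary output. -/
def sgn (b : Bool) : ℝ := if b then 1 else -1

/-- A tripartite no-signaling box in which the third party (Grace) holds a single fixed input:
nonnegative, normalized, and every single- and two-party marginal is independent of the
remaining parties' inputs. -/
def IsNS3Box {n m : ℕ} (p : Bool → Bool → Bool → Fin n → Fin m → ℝ) : Prop :=
  (∀ a b g x y, 0 ≤ p a b g x y) ∧
  (∀ x y, ∑ a, ∑ b, ∑ g, p a b g x y = 1) ∧
  (∀ a g x y y', ∑ b, p a b g x y = ∑ b, p a b g x y') ∧
  (∀ b g y x x', ∑ a, p a b g x y = ∑ a, p a b g x' y)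

/-- The correlator `⟨A_x B_y⟩` of the Alice–Bob marginal of a tripartite box. -/
def corrAB {n m : ℕ} (p : Bool → Bool → Bool → Fin n → Fin m → ℝ)
    (x : Fin n) (y : Fin m) : ℝ :=
  ∑ a, ∑ b, sgn a * sgn b * (∑ g, p a b g x y)

/-- The correlator `⟨B₁ᵍ B₁⟩` between Grace's output and Bob's output at Bob's input `y = 1`
(the input `0 : Fin m`), computed from the Bob–Grace marginal. -/
def corrBG {n m : ℕ} [NeZero n] [NeZero m]
    (p : Bool → Bool → Bool → Fin n → Fin m → ℝ) : ℝ :=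
  ∑ b, ∑ g, sgn b * sgn g * (∑ a, p a b g 0 0)

/-- Monogamy between the CHSH value of the Alice–Bob marginal and the Grace–Bob correlator
at Bob's first input: `β_CHSH + 2⟨B₁ᵍB₁⟩ ≤ 4` for any tripartite no-signaling box. -/
theorem chsh_monogamy_gentle (p : Bool → Bool → Bool → Fin 2 → Fin 2 → ℝ)
    (hp : IsNS3Box p) :
    (corrAB p 0 0 + corrAB p 0 1 + corrAB p 1 0 - corrAB p 1 1) + 2 * corrBG p ≤ 4 := by
  obtain ⟨h0, h1, hA, hB⟩ := hp
  have n1 := h1 0 0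
  have n := fun a b g x y => h0 a b g x y
  simp only [corrAB, corrBG, sgn, Fintype.sum_bool, Fin.forall_fin_two, Bool.forall_bool,
    if_true, Bool.false_eq_true, if_false] at *
  linarith
end

section
/- Let n, k be positive integers with k ≤ n/2 and k dividing n, and let a : ℤ → {−1,+1} be extended with the sign-flip convention a_{n+m} = −a_m for all m ∈ {1,…,k}, and let b : {1,…,n} → {−1,+1}. Then for all j, l ∈ {1,…,k}: Σ_{i=0}^{(n/k)−2} a_{j+ik+l−1}·(b_{j+ik} + b_{j+(i+1)k}) + a_{j+n−k+l−1}·(b_{j+n−k} − b_j) ≤ 2(n/k − 1). (These k² shifted chain expressions sum to the generalized chain bilinear form Σ_{x,y} C_{x,y} a_x b_y, yielding the classical bound 2kn − 2k².) -/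
open Finset

theorem chain_aux (A B : ℕ → ℝ) (hA : ∀ i, A i = 1 ∨ A i = -1)
    (hB : ∀ i, B i = 1 ∨ B i = -1) (N : ℕ) :
    (∑ i ∈ Finset.range N, A i * (B i + B (i + 1))) + |B N - B 0| ≤ 2 * (N : ℝ) := by
  induction N with
  | zero => simp
  | succ N ih =>
    rw [Finset.sum_range_succ]
    push_cast
    have h1 : A N * (B N + B (N + 1)) ≤ 2 - |B (N + 1) - B N| := by
      rcases hA N with h | h <;> rcases hB N with h' | h' <;>
        rcases hB (N + 1) with h'' | h'' <;> rw [h, h', h''] <;> norm_num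
    have h2 := abs_sub_le (B (N + 1)) (B N) (B 0)
    linarith

/-- Each of the `k²` shifted chain Bell expressions (with `n/k` settings) used to decompose
the generalized chain inequality is bounded by its classical value `2(n/k − 1)` for all
`±1`-valued assignments `a, b`, where `a` obeys the sign-flip convention
`a_{n+m} = −a_m` for `m ∈ {1,…,k}`. -/
theorem shifted_chain_classical_bound (n k : ℕ) (hk : 0 < k) (hkn : 2 * k ≤ n)
    (hdvd : k ∣ n)
    (a b : ℤ → ℝ)
    (ha : ∀ i, a i = 1 ∨ a i = -1) (hb : ∀ i, b i = 1 ∨ b i = -1)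
    (hflip : ∀ m : ℤ, 1 ≤ m → m ≤ (k : ℤ) → a ((n : ℤ) + m) = - a m)
    (j l : ℤ) (hj1 : 1 ≤ j) (hjk : j ≤ (k : ℤ)) (hl1 : 1 ≤ l) (hlk : l ≤ (k : ℤ)) :
    (∑ i ∈ Finset.range (n / k - 1),
        a (j + (i : ℤ) * k + l - 1) * (b (j + (i : ℤ) * k) + b (j + ((i : ℤ) + 1) * k))) +
      a (j + (n : ℤ) - (k : ℤ) + l - 1) * (b (j + (n : ℤ) - (k : ℤ)) - b j) ≤
    2 * (((n / k : ℕ) : ℝ) - 1) := by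
  obtain ⟨q, rfl⟩ := hdvd
  have hq : 2 ≤ q := by
    by_contra h
    have : q ≤ 1 := by omega
    nlinarith
  obtain ⟨N, rfl⟩ : ∃ N, q = N + 1 := ⟨q - 1, by omega⟩
  rw [Nat.mul_div_cancel_left _ hk, Nat.add_sub_cancel]
  have h := chain_aux (fun i => a (j + (i : ℤ) * k + l - 1)) (fun i => b (j + (i : ℤ) * k))
    (fun i => ha _) (fun i => hb _) N
  have e : j + ((k * (N + 1) : ℕ) : ℤ) - (k : ℤ) = j + (N : ℤ) * k := by
    push_cast; ring
  rw [e]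
  simp only [Nat.cast_add, Nat.cast_one, Nat.cast_zero, zero_mul, add_zero] at h ⊢
  have h3 : a (j + (N : ℤ) * k + l - 1) * (b (j + (N : ℤ) * k) - b j)
      ≤ |b (j + (N : ℤ) * k) - b j| := by
    rcases ha (j + (N : ℤ) * k + l - 1) with h | h <;> rw [h]
    · rw [one_mul]; exact le_abs_self _
    · rw [neg_one_mul]; exact neg_le_abs _
  linarith
end
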